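/- arXiv:math/0412146 — 2 statements merged into one kernel-verified Lean document; each statement's English description precedes it below -/
import Mathlib

section
/- (Owen's Rellich inequality for convex domains) Let Ω ⊂ ℝ^N be a bounded convex open set and d(x) = dist(x, ∂Ω). Then for every u ∈ C_c^∞(Ω), ∫_Ω (Δu)² dx ≥ (9/16) ∫_Ω u²/d(x)⁴ dx. -/
open Real MeasureTheory

/-- The Laplacian of `f : ℝ^N → ℝ`. -/
noncomputable def lap {N : ℕ} (f : EuclideanSpace ℝ (Fin N) → ℝ)
    (x : EuclideanSpace ℝ (Fin N)) : ℝ :=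
  ∑ i, iteratedFDeriv ℝ 2 f x ![EuclideanSpace.single i 1, EuclideanSpace.single i 1]

/-! ### Geometry of the distance function -/

theorem ball_infDist_frontier_subset {E : Type*} [NormedAddCommGroup E] [NormedSpace ℝ E]
    {Ω : Set E} {x : E} (hx : x ∈ Ω) :
    Metric.ball x (Metric.infDist x (frontier Ω)) ⊆ Ω := by
  intro z hz
  by_contra hzΩ
  have hpos : 0 < Metric.infDist x (frontier Ω) := Metric.pos_of_mem_ball hz
  have hc : IsPreconnected (Metric.ball x (Metric.infDist x (frontier Ω))) :=
    (convex_ball _ _).isPreconnected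
  have hnf : ∀ w ∈ Metric.ball x (Metric.infDist x (frontier Ω)), w ∉ frontier Ω :=
    fun w hw => Metric.ball_infDist_subset_compl hw
  have hxb := Metric.mem_ball_self (x := x) hpos
  obtain ⟨w, -, hw1, hw2⟩ := hc (interior Ω) (closure Ω)ᶜ isOpen_interior
    isClosed_closure.isOpen_compl
    (fun w hw => by
      by_contra h
      simp only [Set.mem_union, Set.mem_compl_iff, not_or, not_not] at h
      exact hnf w hw ⟨h.2, h.1⟩)
    ⟨x, hxb, by
      by_contra h
      exact hnf x hxb ⟨subset_closure hx, h⟩⟩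
    ⟨z, hz, fun h => hnf z hz ⟨h, fun h' => hzΩ (interior_subset h')⟩⟩
  exact hw2 (subset_closure (interior_subset hw1))

theorem infDist_frontier_pos {E : Type*} [NormedAddCommGroup E] [NormedSpace ℝ E]
    {Ω : Set E} (hΩ : IsOpen Ω) (hf : (frontier Ω).Nonempty) {x : E} (hx : x ∈ Ω) :
    0 < Metric.infDist x (frontier Ω) := by
  refine (isClosed_frontier.notMem_iff_infDist_pos hf).1 ?_
  intro h
  rw [hΩ.frontier_eq] at h
  exact h.2 hx

theorem concaveOn_infDist_frontier {E : Type*} [NormedAddCommGroup E] [NormedSpace ℝ E]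
    {Ω : Set E} (hΩ : IsOpen Ω) (hconv : Convex ℝ Ω) (hf : (frontier Ω).Nonempty) :
    ConcaveOn ℝ Ω (fun x => Metric.infDist x (frontier Ω)) := by
  refine ⟨hconv, ?_⟩
  intro x hx y hy a b ha hb hab
  simp only [smul_eq_mul]
  have hdx := infDist_frontier_pos hΩ hf hx
  have hdy := infDist_frontier_pos hΩ hf hy
  have hbx := ball_infDist_frontier_subset hx
  have hby := ball_infDist_frontier_subset hy
  set p := Metric.infDist x (frontier Ω)
  set q := Metric.infDist y (frontier Ω)
  have hR : 0 < a * p + b * q := by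
    rcases ha.eq_or_lt with h | h
    · have : b = 1 := by linarith
      subst this; rw [← h]; linarith
    · have := mul_pos h hdx
      have := mul_nonneg hb hdy.le
      linarith
  set R := a * p + b * q with hRdef
  rw [Metric.le_infDist hf]
  intro z hz
  by_contra hlt
  push Not at hlt
  have hzΩ : z ∉ Ω := by
    intro h
    rw [hΩ.frontier_eq] at hz
    exact hz.2 h
  apply hzΩ
  set w := z - (a • x + b • y) with hw
  have hwn : ‖w‖ < R := by
    rw [hw, ← dist_eq_norm, dist_comm]; exact hlt
  have h1 : x + (p / R) • w ∈ Ω := by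
    apply hbx
    rw [Metric.mem_ball, dist_eq_norm, add_sub_cancel_left, norm_smul, Real.norm_eq_abs,
      abs_of_pos (by positivity), div_mul_eq_mul_div, div_lt_iff₀ hR]
    gcongr
  have h2 : y + (q / R) • w ∈ Ω := by
    apply hby
    rw [Metric.mem_ball, dist_eq_norm, add_sub_cancel_left, norm_smul, Real.norm_eq_abs,
      abs_of_pos (by positivity), div_mul_eq_mul_div, div_lt_iff₀ hR]
    gcongr
  have h3 := hconv h1 h2 ha hb hab
  have : a • (x + (p / R) • w) + b • (y + (q / R) • w) = z := by
    have e : a * (p / R) + b * (q / R) = 1 := by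
      rw [← mul_div_assoc, ← mul_div_assoc, ← add_div, ← hRdef, div_self hR.ne']
    calc a • (x + (p / R) • w) + b • (y + (q / R) • w)
        = (a • x + b • y) + (a * (p / R) + b * (q / R)) • w := by module
      _ = z := by rw [e, hw]; module
  rwa [this] at h3

/-- Tangent line inequality for concave functions. -/
theorem concave_tangent {E : Type*} [NormedAddCommGroup E] [NormedSpace ℝ E]
    {Ω : Set E} {d : E → ℝ} (hd : ConcaveOn ℝ Ω d) {x e : E} {s : ℝ} (hx : x ∈ Ω)
    (hy : x + s • e ∈ Ω) (hl : LineDifferentiableAt ℝ d x e) :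
    d (x + s • e) - d x ≤ s * lineDeriv ℝ d x e := by
  have h := (hl.hasLineDerivAt.smul s).tendsto_slope_zero_right
  refine ge_of_tendsto h ?_
  filter_upwards [Ioc_mem_nhdsGT (zero_lt_one (α := ℝ))] with t ht
  have h1 := hd.2 hx hy (sub_nonneg.2 ht.2) ht.1.le (sub_add_cancel 1 t)
  have h2 : (1 - t) • x + t • (x + s • e) = x + t • s • e := by module
  rw [h2] at h1
  simp only [smul_eq_mul] at h1 ⊢
  rw [inv_mul_eq_div, le_div_iff₀ ht.1]
  linarith

/-- The gradient of the distance function has norm at least one. -/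
theorem one_le_grad_infDist {N : ℕ} {Ω : Set (EuclideanSpace ℝ (Fin N))}
    (hΩ : IsOpen Ω) (hf : (frontier Ω).Nonempty) {x : EuclideanSpace ℝ (Fin N)} (hx : x ∈ Ω)
    (hdiff : DifferentiableAt ℝ (fun x => Metric.infDist x (frontier Ω)) x) :
    1 ≤ ∑ i, (lineDeriv ℝ (fun x => Metric.infDist x (frontier Ω)) x
      (EuclideanSpace.single i 1)) ^ 2 := by
  have hpos := infDist_frontier_pos hΩ hf hx
  obtain ⟨y, hy, hxy⟩ := isClosed_frontier.exists_infDist_eq_dist hf x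
  set d := fun x => Metric.infDist x (frontier Ω) with hd
  set w := y - x with hw
  have hwn : ‖w‖ = d x := by rw [hw, ← dist_eq_norm, dist_comm]; exact hxy.symm
  have hdx : 0 < d x := hpos
  have h := (hdiff.lineDifferentiableAt (v := w)).hasLineDerivAt.tendsto_slope_zero_right
  have h1 : lineDeriv ℝ d x w ≤ - d x := by
    refine le_of_tendsto h ?_
    filter_upwards [Ioc_mem_nhdsGT (zero_lt_one (α := ℝ))] with t ht
    have h2 : d (x + t • w) ≤ (1 - t) * d x := by
      refine (Metric.infDist_le_dist_of_mem hy).trans ?_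
      rw [dist_comm, dist_eq_norm]
      have : y - (x + t • w) = (1 - t) • w := by rw [hw]; module
      rw [this, norm_smul, Real.norm_eq_abs, abs_of_nonneg (by linarith [ht.2]), hwn]
    rw [smul_eq_mul, inv_mul_eq_div, div_le_iff₀ ht.1]
    linarith
  rw [hdiff.lineDeriv_eq_fderiv] at h1
  simp_rw [hdiff.lineDeriv_eq_fderiv]
  have h3 : fderiv ℝ d x w = ∑ i, w i * fderiv ℝ d x (EuclideanSpace.single i 1) := by
    conv_lhs => rw [← (EuclideanSpace.basisFun (Fin N) ℝ).sum_repr w]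
    simp
  have h4 := Finset.sum_mul_sq_le_sq_mul_sq Finset.univ (fun i => w i)
    (fun i => fderiv ℝ d x (EuclideanSpace.single i 1))
  rw [← h3] at h4
  have h5 : ∑ i, (w i) ^ 2 = d x ^ 2 := by
    rw [← hwn, EuclideanSpace.norm_sq_eq]; simp
  rw [h5] at h4
  have h6 : d x ^ 2 ≤ (fderiv ℝ d x w) ^ 2 := by nlinarith
  have h7 : d x ^ 2 * 1 ≤ d x ^ 2 *
      ∑ i, (fderiv ℝ d x (EuclideanSpace.single i 1)) ^ 2 := by linarith
  exact le_of_mul_le_mul_left h7 (by positivity)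

/-- Weak superharmonicity (directional form). -/
theorem weak_concave {N : ℕ} {Ω : Set (EuclideanSpace ℝ (Fin N))}
    (hΩ : IsOpen Ω) (hbdd : Bornology.IsBounded Ω) {d φ : EuclideanSpace ℝ (Fin N) → ℝ}
    (hd : ConcaveOn ℝ Ω d) (hdl : LipschitzWith 1 d) {C : NNReal} (hφ : LipschitzWith C φ)
    (hφc : HasCompactSupport φ) (hφs : tsupport φ ⊆ Ω) (hφ0 : ∀ x, 0 ≤ φ x)
    (e : EuclideanSpace ℝ (Fin N)) :
    0 ≤ ∫ x, lineDeriv ℝ φ x e * Ω.indicator (fun x => lineDeriv ℝ d x e) x := by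
  set g := Ω.indicator (fun x => lineDeriv ℝ d x e) with hg
  have hgm : Measurable g := (measurable_lineDeriv hdl.continuous).indicator hΩ.measurableSet
  have hgb : ∀ x, ‖g x‖ ≤ ‖e‖ := by
    intro x
    refine (norm_indicator_le_norm_self _ _).trans ?_
    simpa using norm_lineDeriv_le_of_lipschitz (x₀ := x) (v := e) ℝ hdl
  have hgi : Integrable g := by
    rw [hg, integrable_indicator_iff hΩ.measurableSet]
    refine Measure.integrableOn_of_bounded (M := ‖e‖) hbdd.measure_lt_top.ne
      (measurable_lineDeriv hdl.continuous).aestronglyMeasurable ?_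
    filter_upwards with x
    simpa using norm_lineDeriv_le_of_lipschitz (x₀ := x) (v := e) ℝ hdl
  have hφi : Integrable φ := hφ.continuous.integrable_of_hasCompactSupport hφc
  obtain ⟨ε, hε, hthick⟩ := IsCompact.exists_thickening_subset_open hφc hΩ hφs
  refine ge_of_tendsto
    (hφ.integral_inv_smul_sub_mul_tendsto_integral_lineDeriv_mul hgi e) ?_
  have hev : ∀ᶠ t : ℝ in nhdsWithin 0 (Set.Ioi 0), t * ‖e‖ < ε := by
    have : Filter.Tendsto (fun t : ℝ => t * ‖e‖) (nhdsWithin 0 (Set.Ioi 0)) (nhds (0 * ‖e‖)) :=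
      ((continuous_id.mul continuous_const).tendsto 0).mono_left nhdsWithin_le_nhds
    rw [zero_mul] at this
    exact this.eventually (gt_mem_nhds hε)
  filter_upwards [hev, self_mem_nhdsWithin] with t hte ht
  have ht : 0 < t := ht
  have e1 : ∫ x, φ (x + t • e) * g x = ∫ x, φ x * g (x - t • e) := by
    rw [← integral_sub_right_eq_self _ (t • e)]; simp
  have i1 : Integrable (fun x => φ (x + t • e) * g x) :=
    (hφi.comp_add_right (t • e)).mul_bdd (c := ‖e‖) hgm.aestronglyMeasurable
      (Filter.Eventually.of_forall hgb)
  have i2 : Integrable (fun x => φ x * g x) :=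
    hφi.mul_bdd (c := ‖e‖) hgm.aestronglyMeasurable (Filter.Eventually.of_forall hgb)
  have i3 : Integrable (fun x => φ x * g (x - t • e)) :=
    hφi.mul_bdd (c := ‖e‖) (hgm.comp (measurable_id.sub_const _)).aestronglyMeasurable
      (Filter.Eventually.of_forall fun x => hgb _)
  have e2 : ∫ x, (t⁻¹ • (φ (x + t • e) - φ x)) * g x
      = t⁻¹ * ∫ x, φ x * (g (x - t • e) - g x) := by
    simp only [smul_eq_mul, mul_assoc, integral_const_mul]
    simp only [sub_mul, mul_sub]
    rw [integral_sub i1 i2, integral_sub i3 i2, e1]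
  rw [e2]
  refine mul_nonneg (by positivity) (integral_nonneg_of_ae ?_)
  have hae := hdl.ae_lineDifferentiableAt (μ := volume) e
  have hae' : ∀ᵐ x : EuclideanSpace ℝ (Fin N), LineDifferentiableAt ℝ d (x - t • e) e :=
    (measurePreserving_sub_right volume (t • e)).quasiMeasurePreserving.ae hae
  filter_upwards [hae, hae'] with x h1 h2
  by_cases hx : x ∈ tsupport φ
  · have hxΩ := hφs hx
    have hyΩ : x - t • e ∈ Ω := by
      apply hthick
      rw [Metric.mem_thickening_iff]
      refine ⟨x, hx, ?_⟩
      rw [dist_eq_norm]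
      simpa [norm_smul, abs_of_pos ht] using hte
    refine mul_nonneg (hφ0 x) ?_
    have a1 := concave_tangent (s := -t) hd hxΩ (by simpa [sub_eq_add_neg] using hyΩ) h1
    have a2 := concave_tangent (s := t) hd hyΩ (by simpa using hxΩ) h2
    rw [neg_smul, ← sub_eq_add_neg] at a1
    rw [sub_add_cancel] at a2
    rw [hg, Set.indicator_of_mem hxΩ, Set.indicator_of_mem hyΩ]
    have : t * lineDeriv ℝ d x e ≤ t * lineDeriv ℝ d (x - t • e) e := by linarith
    have := le_of_mul_le_mul_left this ht
    linarith
  · simp [image_eq_zero_of_notMem_tsupport hx]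

/-! ### Division by the distance -/

theorem tsupport_div_subset {E : Type*} [TopologicalSpace E] (f d : E → ℝ) :
    tsupport (fun x => f x / d x) ⊆ tsupport f := by
  refine closure_mono ?_
  intro x hx hfx
  exact hx (by simp [hfx])

theorem lipschitz_div {E : Type*} [NormedAddCommGroup E]
    {Ω : Set E} {d f : E → ℝ} (hdl : LipschitzWith 1 d) (hpos : ∀ x ∈ Ω, 0 < d x)
    (hf : ∃ C, LipschitzWith C f) (hfc : HasCompactSupport f) (hfs : tsupport f ⊆ Ω) :
    ∃ C, LipschitzWith C (fun x => f x / d x) := by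
  obtain ⟨C, hC⟩ := hf
  obtain ⟨M, hM⟩ := hfc.exists_bound_of_continuous hC.continuous
  have hδ : ∃ δ : ℝ, 0 < δ ∧ ∀ x ∈ tsupport f, δ ≤ d x := by
    rcases (tsupport f).eq_empty_or_nonempty with h | h
    · exact ⟨1, one_pos, by simp [h]⟩
    · obtain ⟨x, hx, hmin⟩ := IsCompact.exists_isMinOn hfc h hdl.continuous.continuousOn
      exact ⟨d x, hpos x (hfs hx), fun y hy => hmin hy⟩
  obtain ⟨δ, hδ, hδd⟩ := hδ
  have hM0 : 0 ≤ M := (norm_nonneg _).trans (hM 0)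
  have hC0 : (0:ℝ) ≤ C := C.2
  have key1 : ∀ x y, x ∈ tsupport f → y ∉ tsupport f →
      |f x / d x - f y / d y| ≤ (C / δ + M / δ ^ 2) * dist x y := by
    intro x y hx hy
    have hfy : f y = 0 := image_eq_zero_of_notMem_tsupport hy
    have h1 : |f x| ≤ C * dist x y := by
      have := hC.dist_le_mul x y
      rwa [hfy, Real.dist_eq, sub_zero] at this
    have hdx := hδd x hx
    have hdx0 : 0 < d x := hδ.trans_le hdx
    rw [hfy, zero_div, sub_zero, abs_div, abs_of_pos hdx0]
    calc |f x| / d x ≤ C * dist x y / δ := by gcongr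
      _ = C / δ * dist x y := by ring
      _ ≤ _ := by
        have : 0 ≤ M / δ ^ 2 := by positivity
        gcongr
        linarith
  refine ⟨⟨C / δ + M / δ ^ 2, by positivity⟩, LipschitzWith.of_dist_le_mul ?_⟩
  intro x y
  rw [Real.dist_eq]
  change _ ≤ (C / δ + M / δ ^ 2) * dist x y
  by_cases hx : x ∈ tsupport f <;> by_cases hy : y ∈ tsupport f
  · have hdx := hδd x hx
    have hdy := hδd y hy
    have hdx0 : 0 < d x := hδ.trans_le hdx
    have hdy0 : 0 < d y := hδ.trans_le hdy
    have h1 : |f x - f y| ≤ C * dist x y := hC.dist_le_mul x y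
    have h2 : |d y - d x| ≤ dist x y := by
      have := hdl.dist_le_mul y x
      rw [dist_comm y x] at this
      simpa [Real.dist_eq] using this
    have h3 : |f y| ≤ M := hM y
    have e : f x / d x - f y / d y = (f x - f y) / d x + f y * (d y - d x) / (d x * d y) := by
      field_simp; ring
    rw [e]
    refine (abs_add_le _ _).trans ?_
    rw [abs_div, abs_div, abs_mul, abs_mul, abs_of_pos hdx0, abs_of_pos hdy0]
    calc |f x - f y| / d x + |f y| * |d y - d x| / (d x * d y)
        ≤ C * dist x y / δ + M * dist x y / (δ * δ) := by gcongr
      _ = _ := by ring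
  · exact key1 x y hx hy
  · rw [abs_sub_comm, dist_comm]; exact key1 y x hy hx
  · simp only [image_eq_zero_of_notMem_tsupport hx, image_eq_zero_of_notMem_tsupport hy, zero_div,
      sub_zero, abs_zero]
    positivity

theorem lipschitz_div_pow {E : Type*} [NormedAddCommGroup E]
    {Ω : Set E} {d : E → ℝ} (hdl : LipschitzWith 1 d) (hpos : ∀ x ∈ Ω, 0 < d x) {f : E → ℝ}
    (hf : ∃ C, LipschitzWith C f) (hfc : HasCompactSupport f) (hfs : tsupport f ⊆ Ω) (k : ℕ) :
    (∃ C, LipschitzWith C (fun x => f x / d x ^ k)) ∧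
      HasCompactSupport (fun x => f x / d x ^ k) ∧ tsupport (fun x => f x / d x ^ k) ⊆ Ω := by
  have hs := (tsupport_div_subset f (fun x => d x ^ k))
  refine ⟨?_, hfc.of_isClosed_subset (isClosed_tsupport _) hs, hs.trans hfs⟩
  clear hs
  induction k with
  | zero => simpa using hf
  | succ k ih =>
    have hs := (tsupport_div_subset f (fun x => d x ^ k))
    have := lipschitz_div hdl hpos ih (hfc.of_isClosed_subset (isClosed_tsupport _) hs)
      (hs.trans hfs)
    simpa only [div_div, ← pow_succ] using this

theorem sq_facts {N : ℕ} {Ω : Set (EuclideanSpace ℝ (Fin N))}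
    {v : EuclideanSpace ℝ (Fin N) → ℝ} (hv : ContDiff ℝ (⊤ : ℕ∞) v)
    (hvc : HasCompactSupport v) (hvs : tsupport v ⊆ Ω) :
    (∃ C, LipschitzWith C (fun x => v x ^ 2)) ∧ HasCompactSupport (fun x => v x ^ 2) ∧
      tsupport (fun x => v x ^ 2) ⊆ Ω := by
  have hs : tsupport (fun x => v x ^ 2) ⊆ tsupport v := by
    refine closure_mono ?_
    intro x hx hfx
    exact hx (by simp [hfx])
  have hc : HasCompactSupport (fun x => v x ^ 2) := hvc.of_isClosed_subset (isClosed_tsupport _) hs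
  exact ⟨ContDiff.lipschitzWith_of_hasCompactSupport hc (hv.pow 2) (by simp), hc, hs.trans hvs⟩

theorem dir_facts {N : ℕ} {Ω : Set (EuclideanSpace ℝ (Fin N))}
    {v : EuclideanSpace ℝ (Fin N) → ℝ} (hv : ContDiff ℝ (⊤ : ℕ∞) v)
    (hvc : HasCompactSupport v) (hvs : tsupport v ⊆ Ω) (e : EuclideanSpace ℝ (Fin N)) :
    ContDiff ℝ (⊤ : ℕ∞) (fun x => fderiv ℝ v x e) ∧ HasCompactSupport (fun x => fderiv ℝ v x e) ∧
      tsupport (fun x => fderiv ℝ v x e) ⊆ Ω :=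
  ⟨(hv.fderiv_right (m := (⊤ : ℕ∞)) (by simp)).clm_apply contDiff_const, hvc.fderiv_apply ℝ e,
    (tsupport_fderiv_apply_subset ℝ e).trans hvs⟩

theorem integrable_sq_div {N : ℕ} {Ω : Set (EuclideanSpace ℝ (Fin N))}
    {d : EuclideanSpace ℝ (Fin N) → ℝ} (hdl : LipschitzWith 1 d) (hpos : ∀ x ∈ Ω, 0 < d x)
    {v : EuclideanSpace ℝ (Fin N) → ℝ} (hv : ContDiff ℝ (⊤ : ℕ∞) v)
    (hvc : HasCompactSupport v) (hvs : tsupport v ⊆ Ω) (k : ℕ) :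
    Integrable (fun x => v x ^ 2 / d x ^ k) := by
  obtain ⟨h1, h2, h3⟩ := sq_facts hv hvc hvs
  obtain ⟨⟨C, hC⟩, h4, -⟩ := lipschitz_div_pow hdl hpos h1 h2 h3 k
  exact hC.continuous.integrable_of_hasCompactSupport h4

/-! ### Hardy inequalities -/

theorem hardy_dir {N : ℕ} {Ω : Set (EuclideanSpace ℝ (Fin N))}
    (hΩ : IsOpen Ω) (hbdd : Bornology.IsBounded Ω) {d : EuclideanSpace ℝ (Fin N) → ℝ}
    (hd : ConcaveOn ℝ Ω d) (hdl : LipschitzWith 1 d) (hpos : ∀ x ∈ Ω, 0 < d x)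
    {v : EuclideanSpace ℝ (Fin N) → ℝ} (hv : ContDiff ℝ (⊤ : ℕ∞) v)
    (hvc : HasCompactSupport v) (hvs : tsupport v ⊆ Ω) (m : ℕ) (e : EuclideanSpace ℝ (Fin N)) :
    Integrable (fun x => v x ^ 2 / d x ^ (m + 2) * lineDeriv ℝ d x e ^ 2) ∧
    (((m : ℝ) + 1) / 2) ^ 2 * ∫ x, v x ^ 2 / d x ^ (m + 2) * lineDeriv ℝ d x e ^ 2 ≤
      ∫ x, (fderiv ℝ v x e) ^ 2 / d x ^ m := by
  obtain ⟨hw, hwc, hws⟩ := dir_facts hv hvc hvs e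
  have i1 := integrable_sq_div hdl hpos hw hwc hws m
  have hlm : Measurable (fun x => lineDeriv ℝ d x e) := measurable_lineDeriv hdl.continuous
  have i2 : Integrable (fun x => v x ^ 2 / d x ^ (m + 2) * lineDeriv ℝ d x e ^ 2) := by
    refine (integrable_sq_div hdl hpos hv hvc hvs (m + 2)).mul_bdd (c := ‖e‖ ^ 2)
      (hlm.pow_const 2).aestronglyMeasurable (Filter.Eventually.of_forall fun x => ?_)
    rw [norm_pow]
    gcongr
    simpa using norm_lineDeriv_le_of_lipschitz (x₀ := x) (v := e) ℝ hdl
  refine ⟨i2, ?_⟩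
  obtain ⟨h1, h2, h3⟩ := sq_facts hv hvc hvs
  obtain ⟨⟨C, hC⟩, h4, h5⟩ := lipschitz_div_pow hdl hpos h1 h2 h3 (m + 1)
  have hφ0 : ∀ x, 0 ≤ v x ^ 2 / d x ^ (m + 1) := by
    intro x
    by_cases hx : x ∈ tsupport v
    · have := hpos x (hvs hx)
      positivity
    · simp [image_eq_zero_of_notMem_tsupport hx]
  have hweak := weak_concave hΩ hbdd hd hdl hC h4 h5 hφ0 e
  set c : ℝ := ((m : ℝ) + 1) / 2 with hc
  have hc0 : 0 < c := by positivity
  have hle : ∫ x, lineDeriv ℝ (fun x => v x ^ 2 / d x ^ (m + 1)) x e *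
      Ω.indicator (fun x => lineDeriv ℝ d x e) x ≤
      ∫ x, (c⁻¹ * ((fderiv ℝ v x e) ^ 2 / d x ^ m) -
        c * (v x ^ 2 / d x ^ (m + 2) * lineDeriv ℝ d x e ^ 2)) := by
    refine integral_mono_ae ?_ ((i1.const_mul _).sub (i2.const_mul _)) ?_
    · have hi : Integrable (Ω.indicator (fun x => lineDeriv ℝ d x e)) := by
        rw [integrable_indicator_iff hΩ.measurableSet]
        refine Measure.integrableOn_of_bounded (M := ‖e‖) hbdd.measure_lt_top.ne
          hlm.aestronglyMeasurable ?_
        filter_upwards with x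
        simpa using norm_lineDeriv_le_of_lipschitz (x₀ := x) (v := e) ℝ hdl
      refine hi.bdd_mul (c := C * ‖e‖) (measurable_lineDeriv hC.continuous).aestronglyMeasurable
        (Filter.Eventually.of_forall fun x => ?_)
      exact norm_lineDeriv_le_of_lipschitz (x₀ := x) (v := e) ℝ hC
    · filter_upwards [hdl.ae_lineDifferentiableAt (μ := volume) e] with x hx
      by_cases hxΩ : x ∈ Ω
      · have hdx := hpos x hxΩ
        have hvd : HasLineDerivAt ℝ v (fderiv ℝ v x e) x e :=
          ((hv.differentiable (by simp)) x).hasFDerivAt.hasLineDerivAt e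
        have hdd : HasLineDerivAt ℝ d (lineDeriv ℝ d x e) x e := hx.hasLineDerivAt
        have hq : HasLineDerivAt ℝ (fun x => v x ^ 2 / d x ^ (m + 1))
            (2 * v x * fderiv ℝ v x e / d x ^ (m + 1) -
              (m + 1) * v x ^ 2 * lineDeriv ℝ d x e / d x ^ (m + 2)) x e := by
          unfold HasLineDerivAt at hvd hdd ⊢
          have h := (hvd.pow 2).div (hdd.pow (m + 1)) (by simpa using hdx.ne')
          refine h.congr_deriv ?_
          simp
          field_simp
          ring
        rw [hq.lineDeriv, Set.indicator_of_mem hxΩ]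
        set A := fderiv ℝ v x e
        set p := lineDeriv ℝ d x e
        have : c⁻¹ * (A ^ 2 / d x ^ m) - c * (v x ^ 2 / d x ^ (m + 2) * p ^ 2) -
          (2 * v x * A / d x ^ (m + 1) - (m + 1) * v x ^ 2 * p / d x ^ (m + 2)) * p =
          c⁻¹ / d x ^ m * (A - c * v x * p / d x) ^ 2 := by
          have hm : (m : ℝ) + 1 = 2 * c := by rw [hc]; ring
          rw [hm]
          field_simp
          ring
        have h0 : 0 ≤ c⁻¹ / d x ^ m * (A - c * v x * p / d x) ^ 2 := by positivity
        linarith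
      · have hv0 : v x = 0 := image_eq_zero_of_notMem_tsupport fun h => hxΩ (hvs h)
        have hw0 : fderiv ℝ v x e = 0 :=
          image_eq_zero_of_notMem_tsupport (f := fun x => fderiv ℝ v x e) fun h => hxΩ (hws h)
        simp [Set.indicator_of_notMem hxΩ, hv0, hw0]
  rw [integral_sub (i1.const_mul _) (i2.const_mul _), integral_const_mul, integral_const_mul] at hle
  have h6 := hweak.trans hle
  have h7 : 0 ≤ c * (c⁻¹ * ∫ x, (fderiv ℝ v x e) ^ 2 / d x ^ m) -
    c * (c * ∫ x, v x ^ 2 / d x ^ (m + 2) * lineDeriv ℝ d x e ^ 2) := by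
    rw [← mul_sub]; exact mul_nonneg hc0.le h6
  rw [mul_inv_cancel_left₀ hc0.ne'] at h7
  linarith [h7]

theorem hardy_full {N : ℕ} {Ω : Set (EuclideanSpace ℝ (Fin N))}
    (hΩ : IsOpen Ω) (hconv : Convex ℝ Ω) (hbdd : Bornology.IsBounded Ω)
    (hf : (frontier Ω).Nonempty)
    {v : EuclideanSpace ℝ (Fin N) → ℝ} (hv : ContDiff ℝ (⊤ : ℕ∞) v)
    (hvc : HasCompactSupport v) (hvs : tsupport v ⊆ Ω) (m : ℕ) :
    (((m : ℝ) + 1) / 2) ^ 2 * ∫ x, v x ^ 2 / Metric.infDist x (frontier Ω) ^ (m + 2) ≤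
      ∑ i, ∫ x, (fderiv ℝ v x (EuclideanSpace.single i 1)) ^ 2 /
        Metric.infDist x (frontier Ω) ^ m := by
  have hd := concaveOn_infDist_frontier hΩ hconv hf
  have hdl : LipschitzWith 1 (fun x => Metric.infDist x (frontier Ω)) :=
    Metric.lipschitz_infDist_pt _
  have hpos : ∀ x ∈ Ω, 0 < Metric.infDist x (frontier Ω) :=
    fun x hx => infDist_frontier_pos hΩ hf hx
  have H := fun i : Fin N =>
    hardy_dir hΩ hbdd hd hdl hpos hv hvc hvs m (EuclideanSpace.single i 1)
  refine le_trans ?_ (Finset.sum_le_sum fun i _ => (H i).2)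
  rw [← Finset.mul_sum, ← integral_finsetSum _ fun i _ => (H i).1]
  refine mul_le_mul_of_nonneg_left ?_ (by positivity)
  refine integral_mono_ae (integrable_sq_div hdl hpos hv hvc hvs (m + 2))
    (integrable_finsetSum _ fun i _ => (H i).1) ?_
  filter_upwards [hdl.ae_differentiableAt (μ := volume)] with x hx
  simp only [← Finset.mul_sum]
  by_cases hxΩ : x ∈ Ω
  · have h1 := one_le_grad_infDist hΩ hf hxΩ hx
    have := hpos x hxΩ
    exact le_mul_of_one_le_right (by positivity) h1
  · have hv0 : v x = 0 := image_eq_zero_of_notMem_tsupport fun h => hxΩ (hvs h)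
    simp [hv0]

/-! ### Integration by parts for the Laplacian -/

theorem ibp {N : ℕ} {f g : EuclideanSpace ℝ (Fin N) → ℝ} (hf : ContDiff ℝ (⊤ : ℕ∞) f)
    (hfc : HasCompactSupport f) (hg : ContDiff ℝ (⊤ : ℕ∞) g) (hgc : HasCompactSupport g)
    (e : EuclideanSpace ℝ (Fin N)) :
    ∫ x, f x * fderiv ℝ g x e = - ∫ x, fderiv ℝ f x e * g x := by
  obtain ⟨h1, h2, -⟩ := dir_facts hf hfc (Set.subset_univ _) e
  obtain ⟨h3, h4, -⟩ := dir_facts hg hgc (Set.subset_univ _) e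
  refine integral_mul_fderiv_eq_neg_fderiv_mul_of_integrable ?_ ?_ ?_
    (fun x _ => hf.differentiable (by simp) x) (fun x _ => hg.differentiable (by simp) x)
  · exact (h1.continuous.mul hg.continuous).integrable_of_hasCompactSupport hgc.mul_left
  · exact (hf.continuous.mul h3.continuous).integrable_of_hasCompactSupport h4.mul_left
  · exact (hf.continuous.mul hg.continuous).integrable_of_hasCompactSupport hgc.mul_left

theorem fderiv_fderiv_apply {N : ℕ} {f : EuclideanSpace ℝ (Fin N) → ℝ}
    (hf : ContDiff ℝ (⊤ : ℕ∞) f) (x a b : EuclideanSpace ℝ (Fin N)) :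
    fderiv ℝ (fun x => fderiv ℝ f x a) x b = fderiv ℝ (fderiv ℝ f) x b a := by
  have h : DifferentiableAt ℝ (fderiv ℝ f) x :=
    (hf.fderiv_right (m := (⊤ : ℕ∞)) (by simp)).differentiable (by simp) x
  rw [fderiv_clm_apply h (differentiableAt_const a)]
  simp

theorem fderiv_comm {N : ℕ} {f : EuclideanSpace ℝ (Fin N) → ℝ}
    (hf : ContDiff ℝ (⊤ : ℕ∞) f) (a b : EuclideanSpace ℝ (Fin N)) :
    (fun x => fderiv ℝ (fun x => fderiv ℝ f x a) x b) =
      fun x => fderiv ℝ (fun x => fderiv ℝ f x b) x a := by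
  funext x
  rw [fderiv_fderiv_apply hf, fderiv_fderiv_apply hf]
  exact (hf.contDiffAt.isSymmSndFDerivAt (by
    rw [minSmoothness_of_isRCLikeNormedField]
    exact WithTop.coe_le_coe.2 (le_top : (2 : ℕ∞) ≤ ⊤))) b a

theorem swap_ibp {N : ℕ} {u : EuclideanSpace ℝ (Fin N) → ℝ} (hu : ContDiff ℝ (⊤ : ℕ∞) u)
    (huc : HasCompactSupport u) (a b : EuclideanSpace ℝ (Fin N)) :
    ∫ x, fderiv ℝ (fun x => fderiv ℝ u x a) x a * fderiv ℝ (fun x => fderiv ℝ u x b) x b =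
      ∫ x, (fderiv ℝ (fun x => fderiv ℝ u x a) x b) ^ 2 := by
  obtain ⟨ha, hac, -⟩ := dir_facts hu huc (Set.subset_univ _) a
  obtain ⟨hb, hbc, -⟩ := dir_facts hu huc (Set.subset_univ _) b
  obtain ⟨hbb, hbbc, -⟩ := dir_facts hb hbc (Set.subset_univ _) b
  obtain ⟨hab, habc, -⟩ := dir_facts ha hac (Set.subset_univ _) b
  have e1 := ibp ha hac hbb hbbc a
  have e2 := ibp ha hac hab habc b
  have e3 : (fun x => fderiv ℝ (fun x => fderiv ℝ (fun x => fderiv ℝ u x b) x b) x a) =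
      fun x => fderiv ℝ (fun x => fderiv ℝ (fun x => fderiv ℝ u x a) x b) x b := by
    rw [fderiv_comm hb b a, fderiv_comm hu b a]
  have e4 := fun x => congrFun e3 x
  simp only [e4] at e1
  rw [e1] at e2
  simp only [pow_two]
  exact neg_injective e2

theorem owen_aux {N : ℕ} {u : EuclideanSpace ℝ (Fin N) → ℝ} (hu : ContDiff ℝ (⊤ : ℕ∞) u)
    (huc : HasCompactSupport u) :
    ∫ x, (∑ i, fderiv ℝ (fun x => fderiv ℝ u x (EuclideanSpace.single i 1)) x
        (EuclideanSpace.single i 1)) ^ 2 =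
      ∑ i : Fin N, ∑ j : Fin N, ∫ x, (fderiv ℝ (fun x => fderiv ℝ u x
        (EuclideanSpace.single i 1)) x (EuclideanSpace.single j 1)) ^ 2 := by
  have hc : ∀ i j : Fin N, Integrable (fun x =>
      fderiv ℝ (fun x => fderiv ℝ u x (EuclideanSpace.single i 1)) x (EuclideanSpace.single i 1) *
      fderiv ℝ (fun x => fderiv ℝ u x (EuclideanSpace.single j 1)) x
        (EuclideanSpace.single j 1)) := by
    intro i j
    obtain ⟨ha, hac, -⟩ := dir_facts hu huc (Set.subset_univ _) (EuclideanSpace.single i 1)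
    obtain ⟨hb, hbc, -⟩ := dir_facts hu huc (Set.subset_univ _) (EuclideanSpace.single j 1)
    obtain ⟨haa, haac, -⟩ := dir_facts ha hac (Set.subset_univ _) (EuclideanSpace.single i 1)
    obtain ⟨hbb, hbbc, -⟩ := dir_facts hb hbc (Set.subset_univ _) (EuclideanSpace.single j 1)
    exact (haa.continuous.mul hbb.continuous).integrable_of_hasCompactSupport hbbc.mul_left
  simp only [pow_two (∑ i, _), Finset.sum_mul_sum]
  rw [integral_finsetSum _ fun i _ => integrable_finsetSum _ fun j _ => hc i j]
  refine Finset.sum_congr rfl fun i _ => ?_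
  rw [integral_finsetSum _ fun j _ => hc i j]
  exact Finset.sum_congr rfl fun j _ => swap_ibp hu huc _ _

theorem owen_rellich (N : ℕ) (Ω : Set (EuclideanSpace ℝ (Fin N)))
    (hΩ : IsOpen Ω) (hconv : Convex ℝ Ω) (hbdd : Bornology.IsBounded Ω)
    (u : EuclideanSpace ℝ (Fin N) → ℝ) (hu : ContDiff ℝ (⊤ : ℕ∞) u)
    (husupp : HasCompactSupport u) (husupp' : tsupport u ⊆ Ω) :
    ∫ x in Ω, (lap u x) ^ 2 ≥
      9 / 16 * ∫ x in Ω, (u x) ^ 2 / Metric.infDist x (frontier Ω) ^ 4 := by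
  rcases (frontier Ω).eq_empty_or_nonempty with hf | hf
  · simp only [hf, Metric.infDist_empty]
    simp only [ne_eq, OfNat.ofNat_ne_zero, not_false_eq_true, zero_pow, div_zero, integral_zero,
      mul_zero]
    exact integral_nonneg fun x => sq_nonneg _
  have hlap : ∀ x, lap u x = ∑ i, fderiv ℝ (fun x => fderiv ℝ u x (EuclideanSpace.single i 1)) x
        (EuclideanSpace.single i 1) := by
    intro x
    refine Finset.sum_congr rfl fun i _ => ?_
    rw [iteratedFDeriv_two_apply, fderiv_fderiv_apply hu]
    simp
  have hdir := fun i : Fin N => dir_facts hu husupp husupp' (EuclideanSpace.single i 1)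
  have hdir2 := fun i : Fin N => dir_facts (hdir i).1 (hdir i).2.1 (hdir i).2.2
    (EuclideanSpace.single i 1)
  have hL : ∫ x in Ω, (lap u x) ^ 2 = ∫ x, (lap u x) ^ 2 := by
    refine setIntegral_eq_integral_of_forall_compl_eq_zero fun x hx => ?_
    rw [hlap, Finset.sum_eq_zero, zero_pow two_ne_zero]
    intro i _
    exact image_eq_zero_of_notMem_tsupport (f := fun x => fderiv ℝ (fun x => fderiv ℝ u x
      (EuclideanSpace.single i 1)) x (EuclideanSpace.single i 1)) fun h => hx ((hdir2 i).2.2 h)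
  have hR : ∫ x in Ω, (u x) ^ 2 / Metric.infDist x (frontier Ω) ^ 4 =
      ∫ x, (u x) ^ 2 / Metric.infDist x (frontier Ω) ^ 4 := by
    refine setIntegral_eq_integral_of_forall_compl_eq_zero fun x hx => ?_
    have : u x = 0 := image_eq_zero_of_notMem_tsupport fun h => hx (husupp' h)
    simp [this]
  rw [hL, hR]
  simp only [hlap]
  rw [owen_aux hu husupp, ge_iff_le]
  have H1 := hardy_full hΩ hconv hbdd hf hu husupp husupp' 2
  have H2 := fun i : Fin N =>
    hardy_full hΩ hconv hbdd hf (hdir i).1 (hdir i).2.1 (hdir i).2.2 0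
  have H3 := Finset.sum_le_sum fun (i : Fin N) (_ : i ∈ Finset.univ) => H2 i
  simp only [pow_zero, div_one, zero_add, Nat.cast_zero] at H3
  rw [← Finset.mul_sum] at H3
  norm_num at H1 H3 ⊢
  linarith
end

section
/- (Gradient Rellich inequality on convex domains) Let Ω ⊂ ℝ^N be convex with d(x) = dist(x, ∂Ω) bounded on Ω. Then for every u ∈ C_c^∞(Ω), ∫_Ω (Δu)² dx ≥ (1/4) ∫_Ω |∇u|²/d² dx. -/
open Real MeasureTheory

open scoped ENNReal

/-- Directional Hardy weight. -/
noncomputable def hw {E : Type*} [AddCommGroup E] [Module ℝ E] (Ω : Set E) (e x : E) : ℝ≥0∞ :=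
  ⨆ q : ℚ, {y : E | y + (q : ℝ) • e ∉ Ω}.indicator
    (fun _ => ENNReal.ofReal (1 / (4 * (q : ℝ) ^ 2))) x

lemma hardy_seg {f f' : ℝ → ℝ} (hf : ∀ t, HasDerivAt f (f' t) t) (hf' : Continuous f')
    {p q s : ℝ} (hpq : p ≤ q) (hs : ∀ t ∈ Set.Icc p q, t - s ≠ 0) :
    ∫ t in p..q, f t ^ 2 / (4 * (t - s) ^ 2) ≤
      (∫ t in p..q, f' t ^ 2) - (f q ^ 2 / (2 * (q - s)) - f p ^ 2 / (2 * (p - s))) := by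
  have hfc : Continuous f := continuous_iff_continuousAt.2 fun t => (hf t).continuousAt
  have hu : Set.uIcc p q = Set.Icc p q := Set.uIcc_of_le hpq
  set g : ℝ → ℝ := fun t => f t * f' t / (t - s) - f t ^ 2 / (2 * (t - s) ^ 2) with hg
  have hgc : ContinuousOn g (Set.uIcc p q) := by
    rw [hu]
    apply ContinuousOn.sub
    · exact ContinuousOn.div (by fun_prop) (by fun_prop) hs
    · refine ContinuousOn.div (by fun_prop) (by fun_prop) fun t ht => ?_
      have := hs t ht
      positivity
  have hFTC : ∫ t in p..q, g t = f q ^ 2 / (2 * (q - s)) - f p ^ 2 / (2 * (p - s)) := by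
    apply intervalIntegral.integral_eq_sub_of_hasDerivAt (f := fun t => f t ^ 2 / (2 * (t - s)))
    · intro t ht
      rw [hu] at ht
      have h0 := hs t ht
      have h1 : HasDerivAt (fun t => f t ^ 2) (2 * f t * f' t) t := by
        have := (hf t).pow 2
        simp only [Nat.cast_ofNat, Nat.add_one_sub_one, pow_one] at this
        exact this
      have h2 : HasDerivAt (fun t : ℝ => 2 * (t - s)) 2 t := by
        simpa using ((hasDerivAt_id t).sub_const s).const_mul 2
      have h3 := h1.div h2 (by simpa using h0)
      refine h3.congr_deriv ?_
      simp only [hg]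
      field_simp
    · exact hgc.intervalIntegrable
  have h4c : ContinuousOn (fun t => f t ^ 2 / (4 * (t - s) ^ 2)) (Set.uIcc p q) := by
    rw [hu]
    refine ContinuousOn.div (by fun_prop) (by fun_prop) fun t ht => ?_
    have := hs t ht
    positivity
  have h5 : IntervalIntegrable (fun t => f' t ^ 2) volume p q :=
    (by fun_prop : Continuous fun t => f' t ^ 2).intervalIntegrable _ _
  rw [← hFTC, ← intervalIntegral.integral_sub h5 hgc.intervalIntegrable]
  apply intervalIntegral.integral_mono_on hpq h4c.intervalIntegrable
    (h5.sub hgc.intervalIntegrable)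
  intro t ht
  have h0 := hs t ht
  have : f' t ^ 2 - g t - f t ^ 2 / (4 * (t - s) ^ 2) = (f' t - f t / (2 * (t - s))) ^ 2 := by
    simp only [hg]
    field_simp
    ring
  nlinarith [sq_nonneg (f' t - f t / (2 * (t - s)))]

lemma hardy_seg_lint {f f' : ℝ → ℝ} (hf : ∀ t, HasDerivAt f (f' t) t) (hf' : Continuous f')
    {p q s : ℝ} (hpq : p ≤ q) (hs : ∀ t ∈ Set.Icc p q, t - s ≠ 0)
    (hb : 0 ≤ f q ^ 2 / (2 * (q - s)) - f p ^ 2 / (2 * (p - s))) :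
    ∫⁻ t in Set.Ioc p q, ENNReal.ofReal (f t ^ 2 / (4 * (t - s) ^ 2)) ≤
      ∫⁻ t in Set.Ioc p q, ENNReal.ofReal (f' t ^ 2) := by
  have hfc : Continuous f := continuous_iff_continuousAt.2 fun t => (hf t).continuousAt
  have h := hardy_seg hf hf' hpq hs
  rw [intervalIntegral.integral_of_le hpq, intervalIntegral.integral_of_le hpq] at h
  have h4c : ContinuousOn (fun t => f t ^ 2 / (4 * (t - s) ^ 2)) (Set.Icc p q) := by
    refine ContinuousOn.div (by fun_prop) (by fun_prop) fun t ht => ?_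
    have := hs t ht
    positivity
  rw [← ofReal_integral_eq_lintegral_ofReal, ← ofReal_integral_eq_lintegral_ofReal]
  · apply ENNReal.ofReal_le_ofReal
    linarith
  · exact ((by fun_prop : Continuous fun t => f' t ^ 2).integrableOn_Icc).mono_set
      Set.Ioc_subset_Icc_self
  · exact Filter.Eventually.of_forall fun t => by positivity
  · exact h4c.integrableOn_Icc.mono_set Set.Ioc_subset_Icc_self
  · exact Filter.Eventually.of_forall fun t => by positivity

lemma hw_le {I : Set ℝ} {t δ : ℝ} (hδ : 0 < δ) (h : ∀ q : ℝ, |q| < δ → t + q ∈ I) :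
    hw I 1 t ≤ ENNReal.ofReal (1 / (4 * δ ^ 2)) := by
  apply iSup_le
  intro q
  by_cases hq : t + (q : ℝ) ∈ I
  · rw [Set.indicator_of_notMem (by simpa using hq)]
    exact zero_le
  · rw [Set.indicator_of_mem (by simpa using hq)]
    apply ENNReal.ofReal_le_ofReal
    have : δ ≤ |(q : ℝ)| := by
      by_contra hh
      exact hq (h _ (not_le.1 hh))
    rw [← sq_abs (q : ℝ)]
    gcongr

lemma hardy_one {f f' : ℝ → ℝ} (hf : ∀ t, HasDerivAt f (f' t) t) (hf' : Continuous f')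
    (hfs : HasCompactSupport f) {I : Set ℝ} (hI : IsOpen I) (hIc : Convex ℝ I)
    (hfI : tsupport f ⊆ I) :
    ∫⁻ t, ENNReal.ofReal (f t ^ 2) * hw I 1 t ≤ ∫⁻ t, ENNReal.ofReal (f' t ^ 2) := by
  rcases (tsupport f).eq_empty_or_nonempty with he | hne
  · have : f = 0 := by simpa [tsupport_eq_empty_iff] using he
    simp [this]
  have hK : IsCompact (tsupport f) := hfs
  obtain ⟨c, hc⟩ := hK.exists_isLeast hne
  obtain ⟨e, he⟩ := hK.exists_isGreatest hne
  have hce : c ≤ e := hc.2 he.1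
  obtain ⟨ε₁, hε₁, h1⟩ := Metric.isOpen_iff.1 hI c (hfI hc.1)
  obtain ⟨ε₂, hε₂, h2⟩ := Metric.isOpen_iff.1 hI e (hfI he.1)
  set a := c - ε₁ / 2 with ha
  set b := e + ε₂ / 2 with hb
  have haI : a ∈ I := h1 (by rw [Metric.mem_ball, Real.dist_eq, ha, abs_lt]; constructor <;> linarith)
  have hbI : b ∈ I := h2 (by rw [Metric.mem_ball, Real.dist_eq, hb, abs_lt]; constructor <;> linarith)
  have habI : Set.Icc a b ⊆ I := hIc.ordConnected.out haI hbI
  set m := (a + b) / 2 with hm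
  set p := min c m with hp
  set r := max e m with hr
  have hpm : p ≤ m := min_le_right _ _
  have hmr : m ≤ r := le_max_right _ _
  have hap : a < p := lt_min (by linarith) (by linarith)
  have hrb : r < b := max_lt (by linarith) (by linarith)
  have hf0 : ∀ t, (t < c ∨ e < t) → f t = 0 := by
    intro t ht
    by_contra h
    have : t ∈ tsupport f := subset_tsupport _ h
    rcases ht with ht | ht
    · exact absurd (hc.2 this) (not_le.2 ht)
    · exact absurd (he.2 this) (not_le.2 ht)
  have hfc : Continuous f := continuous_iff_continuousAt.2 fun t => (hf t).continuousAt
  have hfz : ∀ t, (t ≤ c ∨ e ≤ t) → f t = 0 := by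
    intro t ht
    rcases ht with ht | ht
    · have : Set.EqOn f 0 (closure (Set.Iio c)) :=
        Set.EqOn.closure (fun x hx => hf0 x (Or.inl hx)) hfc continuous_zero
      exact this (by rw [closure_Iio]; exact ht)
    · have : Set.EqOn f 0 (closure (Set.Ioi e)) :=
        Set.EqOn.closure (fun x hx => hf0 x (Or.inr hx)) hfc continuous_zero
      exact this (by rw [closure_Ioi]; exact ht)
  have hfp : f p = 0 := hfz p (Or.inl (min_le_left _ _))
  have hfr : f r = 0 := hfz r (Or.inr (le_max_left _ _))
  have L := hardy_seg_lint hf hf' (s := a) hpm (fun t ht => by have := ht.1; intro h; linarith)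
    (by rw [hfp]; simp only [ne_eq, OfNat.ofNat_ne_zero, not_false_eq_true, zero_pow, zero_div, sub_zero]
        apply div_nonneg (sq_nonneg _); linarith)
  have R := hardy_seg_lint hf hf' (s := b) hmr (fun t ht => by have := ht.2; intro h; linarith)
    (by rw [hfr]; simp only [ne_eq, OfNat.ofNat_ne_zero, not_false_eq_true, zero_pow, zero_div, zero_sub]
        rw [neg_nonneg]
        apply div_nonpos_of_nonneg_of_nonpos (sq_nonneg _); linarith)
  have hdisj : Disjoint (Set.Ioc p m) (Set.Ioc m r) := by
    rw [Set.disjoint_left]; intro t h1 h2; exact absurd h1.2 (not_le.2 h2.1)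
  calc ∫⁻ t, ENNReal.ofReal (f t ^ 2) * hw I 1 t
      = ∫⁻ t in Set.Ioc p m ∪ Set.Ioc m r, ENNReal.ofReal (f t ^ 2) * hw I 1 t := by
        symm
        apply setLIntegral_eq_of_support_subset
        intro t ht
        rw [Set.Ioc_union_Ioc_eq_Ioc hpm hmr]
        by_contra hh
        apply ht
        have : f t = 0 := by
          rw [Set.mem_Ioc, not_and_or, not_lt, not_le] at hh
          rcases hh with hh | hh
          · exact hfz t (Or.inl (hh.trans (min_le_left _ _)))
          · exact hfz t (Or.inr ((le_max_left _ _).trans hh.le))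
        simp [this]
    _ = (∫⁻ t in Set.Ioc p m, ENNReal.ofReal (f t ^ 2) * hw I 1 t) +
        ∫⁻ t in Set.Ioc m r, ENNReal.ofReal (f t ^ 2) * hw I 1 t :=
        lintegral_union measurableSet_Ioc hdisj
    _ ≤ (∫⁻ t in Set.Ioc p m, ENNReal.ofReal (f t ^ 2 / (4 * (t - a) ^ 2))) +
        ∫⁻ t in Set.Ioc m r, ENNReal.ofReal (f t ^ 2 / (4 * (t - b) ^ 2)) := by
        apply add_le_add
        · apply setLIntegral_mono' measurableSet_Ioc
          intro t ht
          have := hw_le (I := I) (t := t) (δ := t - a) (by linarith [ht.1]) (fun q hq => by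
            rw [abs_lt] at hq
            exact habI ⟨by linarith, by linarith [ht.2]⟩)
          calc _ ≤ ENNReal.ofReal (f t ^ 2) * ENNReal.ofReal (1 / (4 * (t - a) ^ 2)) := by gcongr
            _ = _ := by rw [← ENNReal.ofReal_mul (sq_nonneg _), mul_one_div]
        · apply setLIntegral_mono' measurableSet_Ioc
          intro t ht
          have := hw_le (I := I) (t := t) (δ := b - t) (by linarith [ht.2]) (fun q hq => by
            rw [abs_lt] at hq
            exact habI ⟨by linarith [ht.1], by linarith [ht.2]⟩)
          calc _ ≤ ENNReal.ofReal (f t ^ 2) * ENNReal.ofReal (1 / (4 * (b - t) ^ 2)) := by gcongr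
            _ = _ := by
              rw [← ENNReal.ofReal_mul (sq_nonneg _), mul_one_div, ← neg_sub t b, neg_sq]
    _ ≤ _ := add_le_add L R
    _ = ∫⁻ t in Set.Ioc p m ∪ Set.Ioc m r, ENNReal.ofReal (f' t ^ 2) :=
        (lintegral_union measurableSet_Ioc hdisj).symm
    _ ≤ _ := setLIntegral_le_lintegral _ _

lemma exists_rat_le {τ : ℝ} (hτ : 0 < τ) {w : ℝ≥0∞}
    (h : ∀ q : ℚ, τ < (q : ℝ) → ENNReal.ofReal (1 / (4 * (q : ℝ) ^ 2)) ≤ w) :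
    ENNReal.ofReal (1 / (4 * τ ^ 2)) ≤ w := by
  obtain ⟨u, -, hu, hlim⟩ := Real.exists_seq_rat_strictAnti_tendsto τ
  have hc : ContinuousAt (fun t : ℝ => ENNReal.ofReal (1 / (4 * t ^ 2))) τ := by
    apply ENNReal.continuous_ofReal.continuousAt.comp
    apply ContinuousAt.div (by fun_prop) (by fun_prop)
    positivity
  exact le_of_tendsto (hc.tendsto.comp hlim) (Filter.Eventually.of_forall fun n => h _ (hu n))

lemma weight_bound {N : ℕ} {Ω : Set (EuclideanSpace ℝ (Fin N))}
    (hΩ : IsOpen Ω) (hconv : Convex ℝ Ω) {x : EuclideanSpace ℝ (Fin N)} (hx : x ∈ Ω) :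
    ENNReal.ofReal (1 / (4 * Metric.infDist x (frontier Ω) ^ 2)) ≤
      ∑ i, hw Ω (EuclideanSpace.single i 1) x := by
  rcases (frontier Ω).eq_empty_or_nonempty with he | hne
  · simp [he]
  obtain ⟨y, hy, hxy⟩ := isClosed_frontier.exists_infDist_eq_dist hne x
  have hyΩ : y ∉ Ω := by
    intro h
    rw [hΩ.frontier_eq] at hy
    exact hy.2 h
  obtain ⟨F, hF⟩ := geometric_hahn_banach_open_point hconv hΩ hyΩ
  set d := Metric.infDist x (frontier Ω) with hd
  have hd0 : 0 < d := by
    rw [hxy]; exact dist_pos.2 (fun h => hyΩ (h ▸ hx))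
  set n := (InnerProductSpace.toDual ℝ (EuclideanSpace ℝ (Fin N))).symm F with hn
  have hFn : ∀ z, F z = inner ℝ n z := fun z => by simp [hn]
  have hn0 : 0 < ‖n‖ := by
    rw [norm_pos_iff]
    intro h
    have := hF x hx
    simp [hFn, h] at this
  have hle : F y - F x ≤ ‖n‖ * d := by
    rw [← map_sub, hFn, hxy, dist_comm, dist_eq_norm]
    exact real_inner_le_norm _ _
  have hFi : ∀ i, F (EuclideanSpace.single i 1) = n i := fun i => by
    rw [hFn]; simp [EuclideanSpace.inner_single_right]
  have key : ∀ i, ENNReal.ofReal (n i ^ 2 / (4 * (‖n‖ * d) ^ 2)) ≤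
      hw Ω (EuclideanSpace.single i 1) x := by
    intro i
    by_cases hni : n i = 0
    · simp [hni]
    have hpos : 0 < |n i| := abs_pos.2 hni
    have h1 : n i ^ 2 / (4 * (‖n‖ * d) ^ 2) = 1 / (4 * (‖n‖ * d / |n i|) ^ 2) := by
      rw [div_pow, sq_abs]
      field_simp
    rw [h1]
    apply exists_rat_le (by positivity)
    intro q hq
    rw [div_lt_iff₀ hpos] at hq
    have hmain : ∀ q' : ℚ, ‖n‖ * d < q' * n i →
        ENNReal.ofReal (1 / (4 * (q' : ℝ) ^ 2)) ≤ hw Ω (EuclideanSpace.single i 1) x := by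
      intro q' hq'
      refine le_trans ?_ (le_iSup _ q')
      rw [Set.indicator_of_mem]
      intro hmem
      have := hF _ hmem
      rw [map_add, map_smul, hFi, smul_eq_mul] at this
      linarith
    rcases lt_or_gt_of_ne hni with hneg | hp
    · have := hmain (-q) (by rw [abs_of_neg hneg] at hq; push_cast; linarith)
      simpa using this
    · exact hmain q (by rwa [abs_of_pos hp] at hq)
  calc ENNReal.ofReal (1 / (4 * d ^ 2))
      = ENNReal.ofReal (∑ i, n i ^ 2 / (4 * (‖n‖ * d) ^ 2)) := by
        congr 1
        rw [← Finset.sum_div, ← EuclideanSpace.real_norm_sq_eq]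
        field_simp
    _ = ∑ i, ENNReal.ofReal (n i ^ 2 / (4 * (‖n‖ * d) ^ 2)) :=
        ENNReal.ofReal_sum_of_nonneg fun i _ => by positivity
    _ ≤ _ := Finset.sum_le_sum fun i _ => key i

/-- Partial derivative. -/
noncomputable def pd {N : ℕ} (i : Fin N) (f : EuclideanSpace ℝ (Fin N) → ℝ)
    (x : EuclideanSpace ℝ (Fin N)) : ℝ := fderiv ℝ f x (EuclideanSpace.single i 1)

section
variable {N : ℕ} {f g : EuclideanSpace ℝ (Fin N) → ℝ}

lemma pd_contDiff (i : Fin N) (hf : ContDiff ℝ (⊤ : ℕ∞) f) : ContDiff ℝ (⊤ : ℕ∞) (pd i f) :=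
  (hf.fderiv_right (m := (⊤ : ℕ∞)) (by simp)).clm_apply contDiff_const

lemma pd_tsupport (i : Fin N) : tsupport (pd i f) ⊆ tsupport f := by
  refine closure_minimal ?_ (isClosed_tsupport f)
  intro x hx
  apply support_fderiv_subset ℝ (f := f)
  intro h
  apply hx
  simp [pd, h]

lemma pd_hcs (i : Fin N) (hf : HasCompactSupport f) : HasCompactSupport (pd i f) :=
  hf.of_isClosed_subset (isClosed_tsupport _) (pd_tsupport i)

lemma pd_pd (i j : Fin N) (hf : ContDiff ℝ (⊤ : ℕ∞) f) (x : EuclideanSpace ℝ (Fin N)) :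
    pd i (pd j f) x =
      fderiv ℝ (fderiv ℝ f) x (EuclideanSpace.single i 1) (EuclideanSpace.single j 1) := by
  have hd : DifferentiableAt ℝ (fderiv ℝ f) x :=
    ((hf.fderiv_right (m := (⊤ : ℕ∞)) (by simp)).differentiable (by simp)) x
  change fderiv ℝ (fun y => fderiv ℝ f y (EuclideanSpace.single j 1)) x _ = _
  rw [fderiv_clm_apply hd (by fun_prop)]
  simp

lemma pd_comm (i j : Fin N) (hf : ContDiff ℝ (⊤ : ℕ∞) f) : pd i (pd j f) = pd j (pd i f) := by
  ext x
  rw [pd_pd i j hf, pd_pd j i hf]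
  exact (hf.contDiffAt.isSymmSndFDerivAt (by
    simp only [minSmoothness_of_isRCLikeNormedField]
    exact WithTop.coe_le_coe.2 (le_top : (2 : ℕ∞) ≤ ⊤))) _ _

lemma lap_eq (hf : ContDiff ℝ (⊤ : ℕ∞) f) (x : EuclideanSpace ℝ (Fin N)) :
    lap f x = ∑ i, pd i (pd i f) x := by
  unfold lap
  refine Finset.sum_congr rfl fun i _ => ?_
  rw [iteratedFDeriv_two_apply, pd_pd i i hf]
  simp

lemma int_mul (hf : Continuous f) (hg : Continuous g) (hfs : HasCompactSupport f) :
    Integrable (fun x => f x * g x) :=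
  (hf.mul hg).integrable_of_hasCompactSupport hfs.mul_right

lemma pd_ibp (i : Fin N) (hf : ContDiff ℝ (⊤ : ℕ∞) f) (hg : ContDiff ℝ (⊤ : ℕ∞) g)
    (hfs : HasCompactSupport f) :
    ∫ x, f x * pd i g x = - ∫ x, pd i f x * g x := by
  apply integral_mul_fderiv_eq_neg_fderiv_mul_of_integrable
  · exact int_mul (pd_contDiff i hf).continuous hg.continuous (pd_hcs i hfs)
  · exact int_mul hf.continuous (pd_contDiff i hg).continuous hfs
  · exact int_mul hf.continuous hg.continuous hfs
  · exact fun x _ => hf.differentiable (by simp) x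
  · exact fun x _ => hg.differentiable (by simp) x

lemma pd_cross (i j : Fin N) (hf : ContDiff ℝ (⊤ : ℕ∞) f) (hfs : HasCompactSupport f) :
    ∫ x, pd i (pd i f) x * pd j (pd j f) x = ∫ x, pd i (pd j f) x ^ 2 := by
  have hi := pd_contDiff i hf
  have hj := pd_contDiff j hf
  have h1 := pd_ibp j (pd_contDiff i hi) hj (pd_hcs i (pd_hcs i hfs))
  have h2 := pd_ibp i (pd_contDiff j hi) hj (pd_hcs j (pd_hcs i hfs))
  rw [h1, pd_comm j i hi, ← h2, pd_comm j i hf]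
  simp [sq]

lemma lap_sq (hf : ContDiff ℝ (⊤ : ℕ∞) f) (hfs : HasCompactSupport f) :
    ∫ x, lap f x ^ 2 = ∑ j, ∑ i, ∫ x, pd i (pd j f) x ^ 2 := by
  have hI : ∀ i j, Integrable (fun x => pd i (pd i f) x * pd j (pd j f) x) := fun i j =>
    int_mul (pd_contDiff i (pd_contDiff i hf)).continuous
      (pd_contDiff j (pd_contDiff j hf)).continuous (pd_hcs i (pd_hcs i hfs))
  simp_rw [lap_eq hf, sq, Finset.sum_mul_sum]
  rw [integral_finsetSum _ fun i _ => integrable_finsetSum _ fun j _ => hI i j]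
  simp_rw [fun i => integral_finsetSum Finset.univ fun j _ => hI i j, pd_cross _ _ hf hfs, sq]
  rw [Finset.sum_comm]

lemma hw_measurable {Ω : Set (EuclideanSpace ℝ (Fin N))} (hΩ : IsOpen Ω)
    (e : EuclideanSpace ℝ (Fin N)) : Measurable (hw Ω e) := by
  apply Measurable.iSup
  intro q
  apply measurable_const.indicator
  have : Measurable fun y : EuclideanSpace ℝ (Fin N) => y + (q : ℝ) • e := by fun_prop
  exact (this hΩ.measurableSet).compl

lemma update_eq (i : Fin N) (y : Fin N → ℝ) (t : ℝ) :
    (WithLp.toLp 2 (Function.update y i t) : EuclideanSpace ℝ (Fin N)) =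
      WithLp.toLp 2 (Function.update y i 0) + t • EuclideanSpace.single i (1 : ℝ) := by
  ext k
  by_cases h : k = i
  · subst h; simp
  · simp [h]

lemma hardy_dir_s17 {Ω : Set (EuclideanSpace ℝ (Fin N))} (hΩ : IsOpen Ω) (hconv : Convex ℝ Ω)
    (hf : ContDiff ℝ (⊤ : ℕ∞) f) (hfs : HasCompactSupport f) (hfΩ : tsupport f ⊆ Ω)
    (i : Fin N) :
    ∫⁻ x, ENNReal.ofReal (f x ^ 2) * hw Ω (EuclideanSpace.single i 1) x ≤
      ∫⁻ x, ENNReal.ofReal (pd i f x ^ 2) := by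
  have hm1 : Measurable fun x => ENNReal.ofReal (f x ^ 2) * hw Ω (EuclideanSpace.single i 1) x :=
    ((hf.continuous.pow 2).measurable.ennreal_ofReal).mul (hw_measurable hΩ _)
  have hm2 : Measurable fun x => ENNReal.ofReal (pd i f x ^ 2) :=
    (((pd_contDiff i hf).continuous.pow 2).measurable.ennreal_ofReal)
  have hmp := PiLp.volume_preserving_toLp (Fin N)
  rw [← hmp.lintegral_comp hm1, ← hmp.lintegral_comp hm2]
  apply lintegral_le_of_lmarginal_le {i} (hm1.comp hmp.measurable) (hm2.comp hmp.measurable)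
  rw [lmarginal_singleton, lmarginal_singleton]
  intro y
  change ∫⁻ t : ℝ, ENNReal.ofReal (f (WithLp.toLp 2 (Function.update y i t)) ^ 2) *
      hw Ω (EuclideanSpace.single i 1) (WithLp.toLp 2 (Function.update y i t)) ≤
    ∫⁻ t : ℝ, ENNReal.ofReal (pd i f (WithLp.toLp 2 (Function.update y i t)) ^ 2)
  obtain ⟨x₀, hx₀⟩ : ∃ x₀ : EuclideanSpace ℝ (Fin N), ∀ t : ℝ,
      (WithLp.toLp 2 (Function.update y i t) : EuclideanSpace ℝ (Fin N)) =
        x₀ + t • EuclideanSpace.single i (1 : ℝ) := ⟨_, update_eq i y⟩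
  simp only [hx₀]
  set e : EuclideanSpace ℝ (Fin N) := EuclideanSpace.single i 1 with he
  have he1 : ‖e‖ = 1 := by simp [he]
  have hd : ∀ t : ℝ, HasDerivAt (fun t : ℝ => x₀ + t • e) e t := fun t => by
    simpa using ((hasDerivAt_id t).smul_const e).const_add x₀
  have hiso : Isometry (fun t : ℝ => x₀ + t • e) := by
    apply Isometry.of_dist_eq
    intro s t
    rw [dist_add_left, dist_eq_norm, ← sub_smul, norm_smul, he1, mul_one, dist_eq_norm]
  have hW : ∀ t : ℝ, hw Ω e (x₀ + t • e) = hw ((fun t : ℝ => x₀ + t • e) ⁻¹' Ω) 1 t := by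
    intro t
    unfold hw
    refine iSup_congr fun q => ?_
    have hiff : (x₀ + t • e ∈ {y | y + (q : ℝ) • e ∉ Ω}) ↔
        t ∈ {y : ℝ | y + (q : ℝ) • (1 : ℝ) ∉ (fun t : ℝ => x₀ + t • e) ⁻¹' Ω} := by
      change ¬ (x₀ + t • e + (q : ℝ) • e ∈ Ω) ↔ ¬ (x₀ + (t + (q : ℝ) • (1 : ℝ)) • e ∈ Ω)
      rw [smul_eq_mul, mul_one, add_smul, add_assoc]
    by_cases h : x₀ + t • e ∈ {y | y + (q : ℝ) • e ∉ Ω}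
    · rw [Set.indicator_of_mem h, Set.indicator_of_mem (hiff.1 h)]
    · rw [Set.indicator_of_notMem h, Set.indicator_of_notMem (fun h' => h (hiff.2 h'))]
  simp only [hW]
  apply hardy_one (f := fun t => f (x₀ + t • e)) (f' := fun t => pd i f (x₀ + t • e))
  · intro t
    exact ((hf.differentiable (by simp) (x₀ + t • e)).hasFDerivAt).comp_hasDerivAt t (hd t)
  · exact (pd_contDiff i hf).continuous.comp hiso.continuous
  · exact hfs.comp_isClosedEmbedding hiso.isClosedEmbedding
  · exact hΩ.preimage hiso.continuous
  · intro s hs t ht a b ha hb hab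
    have := hconv hs ht ha hb hab
    simp only [Set.mem_preimage] at this ⊢
    convert this using 1
    simp only [smul_add, smul_smul, smul_eq_mul, add_smul]
    rw [add_add_add_comm, ← add_smul a b x₀, hab, one_smul]
  · exact (tsupport_comp_subset_preimage f hiso.continuous).trans (Set.preimage_mono hfΩ)

lemma hardy_lint {Ω : Set (EuclideanSpace ℝ (Fin N))} (hΩ : IsOpen Ω) (hconv : Convex ℝ Ω)
    (hf : ContDiff ℝ (⊤ : ℕ∞) f) (hfs : HasCompactSupport f) (hfΩ : tsupport f ⊆ Ω) :
    ∫⁻ x in Ω, ENNReal.ofReal (1 / 4 * (f x ^ 2 / Metric.infDist x (frontier Ω) ^ 2)) ≤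
      ENNReal.ofReal (∑ i, ∫ x, pd i f x ^ 2) := by
  have hmf : Measurable fun x => ENNReal.ofReal (f x ^ 2) :=
    (hf.continuous.pow 2).measurable.ennreal_ofReal
  calc _ ≤ ∫⁻ x in Ω, ∑ i, ENNReal.ofReal (f x ^ 2) * hw Ω (EuclideanSpace.single i 1) x := by
        apply setLIntegral_mono' hΩ.measurableSet
        intro x hx
        rw [← Finset.mul_sum]
        refine le_trans (le_of_eq ?_) (mul_le_mul_right (weight_bound hΩ hconv hx) _)
        rw [← ENNReal.ofReal_mul (sq_nonneg _)]
        congr 1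
        rw [one_div_mul_eq_div, div_div, mul_one_div, mul_comm (4 : ℝ)]
    _ ≤ ∫⁻ x, ∑ i, ENNReal.ofReal (f x ^ 2) * hw Ω (EuclideanSpace.single i 1) x :=
        setLIntegral_le_lintegral _ _
    _ = ∑ i, ∫⁻ x, ENNReal.ofReal (f x ^ 2) * hw Ω (EuclideanSpace.single i 1) x :=
        lintegral_finsetSum _ fun i _ => hmf.mul (hw_measurable hΩ _)
    _ ≤ ∑ i, ∫⁻ x, ENNReal.ofReal (pd i f x ^ 2) :=
        Finset.sum_le_sum fun i _ => hardy_dir_s17 hΩ hconv hf hfs hfΩ i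
    _ = _ := by
        rw [ENNReal.ofReal_sum_of_nonneg fun i _ => integral_nonneg fun x => sq_nonneg _]
        refine Finset.sum_congr rfl fun i _ => ?_
        rw [ofReal_integral_eq_lintegral_ofReal]
        · have := int_mul (pd_contDiff i hf).continuous (pd_contDiff i hf).continuous (pd_hcs i hfs)
          simpa only [sq] using this
        · exact Filter.Eventually.of_forall fun x => sq_nonneg _

lemma grad_sq (x : EuclideanSpace ℝ (Fin N)) : ‖gradient f x‖ ^ 2 = ∑ j, pd j f x ^ 2 := by
  rw [EuclideanSpace.real_norm_sq_eq]
  refine Finset.sum_congr rfl fun j _ => ?_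
  congr 1
  have h : inner ℝ (gradient f x) (EuclideanSpace.single j (1 : ℝ)) = pd j f x := by
    simp [gradient, pd]
  rw [← h, EuclideanSpace.inner_single_right]
  simp

end

theorem gradient_rellich_convex (N : ℕ) (Ω : Set (EuclideanSpace ℝ (Fin N)))
    (hΩ : IsOpen Ω) (hconv : Convex ℝ Ω)
    (hbdd : BddAbove ((fun x => Metric.infDist x (frontier Ω)) '' Ω))
    (u : EuclideanSpace ℝ (Fin N) → ℝ) (hu : ContDiff ℝ (⊤ : ℕ∞) u)
    (husupp : HasCompactSupport u) (husupp' : tsupport u ⊆ Ω) :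
    ∫ x in Ω, (lap u x) ^ 2 ≥
      1 / 4 * ∫ x in Ω, ‖gradient u x‖ ^ 2 / Metric.infDist x (frontier Ω) ^ 2 := by

  have hL : ∫ x in Ω, (lap u x) ^ 2 = ∫ x, lap u x ^ 2 := by
    apply setIntegral_eq_integral_of_forall_compl_eq_zero
    intro x hx
    rw [lap_eq hu]
    have : ∀ i, pd i (pd i u) x = 0 := fun i =>
      image_eq_zero_of_notMem_tsupport fun h => hx (husupp' (pd_tsupport i (pd_tsupport i h)))
    simp [this]
  rw [hL, lap_sq hu husupp, ge_iff_le, ← integral_const_mul]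
  have hmd : Measurable fun x => Metric.infDist x (frontier Ω) :=
    (Metric.continuous_infDist_pt _).measurable
  have hmp : ∀ j, Measurable fun x => pd j u x := fun j => (pd_contDiff j hu).continuous.measurable
  have hS : ∀ x, 1 / 4 * (‖gradient u x‖ ^ 2 / Metric.infDist x (frontier Ω) ^ 2) =
      ∑ j, 1 / 4 * (pd j u x ^ 2 / Metric.infDist x (frontier Ω) ^ 2) := by
    intro x
    rw [grad_sq, ← Finset.mul_sum, Finset.sum_div]
  simp_rw [hS]
  have hm : ∀ j, Measurable fun x => 1 / 4 * (pd j u x ^ 2 / Metric.infDist x (frontier Ω) ^ 2) :=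
    fun j => (((hmp j).pow_const 2).div (hmd.pow_const 2)).const_mul _
  have hnn : 0 ≤ ∑ j, ∑ i, ∫ x, pd i (pd j u) x ^ 2 :=
    Finset.sum_nonneg fun j _ => Finset.sum_nonneg fun i _ => integral_nonneg fun x => sq_nonneg _
  rw [integral_eq_lintegral_of_nonneg_ae
    (Filter.Eventually.of_forall fun x => Finset.sum_nonneg fun j _ => by positivity)
    (Finset.measurable_fun_sum _ fun j _ => hm j).aestronglyMeasurable]
  apply ENNReal.toReal_le_of_le_ofReal hnn
  have hS' : ∀ x, ENNReal.ofReal (∑ j, 1 / 4 * (pd j u x ^ 2 / Metric.infDist x (frontier Ω) ^ 2))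
      = ∑ j, ENNReal.ofReal (1 / 4 * (pd j u x ^ 2 / Metric.infDist x (frontier Ω) ^ 2)) :=
    fun x => ENNReal.ofReal_sum_of_nonneg fun j _ => by positivity
  simp_rw [hS']
  rw [lintegral_finsetSum _ fun j _ => (hm j).ennreal_ofReal,
    ENNReal.ofReal_sum_of_nonneg fun j _ =>
      Finset.sum_nonneg fun i _ => integral_nonneg fun x => sq_nonneg _]
  exact Finset.sum_le_sum fun j _ => hardy_lint hΩ hconv (pd_contDiff j hu) (pd_hcs j husupp)
    ((pd_tsupport j).trans husupp')
end
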